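/- Let D ⊂ ℝ^d be a bounded measurable set such that the one-sided derivative γ̄_D′⁺(0) exists and is finite, ρ^{d+1} γ̄̂_D(ρ) is bounded measurable on (0,∞), and lim_{ρ→∞} ρ^{d+1} γ̄̂_D(ρ) exists. Then lim_{ρ→∞} 2π² κ_{d−1} ρ^{d+1} γ̄̂_D(ρ) = −γ̄_D′⁺(0). -/

import Mathlib

open MeasureTheory Metric Set Real Complex Filter
open scoped FourierTransform RealInnerProductSpace Pointwise ENNReal Topology

noncomputable section

/-- The Euclidean space `ℝ^d`. -/
abbrev E (d : ℕ) := EuclideanSpace ℝ (Fin d)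

/-- View a plain vector `Fin d → ℝ` as a point of Euclidean space. -/
def toE {d : ℕ} (v : Fin d → ℝ) : E d := (EuclideanSpace.equiv (Fin d) ℝ).symm v

/-- The point lattice `T = A ℤ^d`. -/
def latticeSet (d : ℕ) (A : Matrix (Fin d) (Fin d) ℝ) : Set (E d) :=
  {p | ∃ n : Fin d → ℤ, p = toE (A.mulVec fun i => (n i : ℝ))}

/-- The fundamental region `F_T = A [0,1)^d`. -/
def fundRegion (d : ℕ) (A : Matrix (Fin d) (Fin d) ℝ) : Set (E d) :=
  (fun y => toE (A.mulVec y)) '' (Set.pi Set.univ fun _ : Fin d => Set.Ico (0 : ℝ) 1)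

/-- Number of lattice points in the translate `D + x`. -/
def latticeCount (d : ℕ) (A : Matrix (Fin d) (Fin d) ℝ) (D : Set (E d)) (x : E d) : ℕ :=
  (((fun y => y + x) '' D) ∩ latticeSet d A).ncard

/-- The dual lattice `T* = {ξ | ξ·p ∈ ℤ for all p ∈ T}`. -/
def dualLattice (d : ℕ) (A : Matrix (Fin d) (Fin d) ℝ) : Set (E d) :=
  {ξ | ∀ p ∈ latticeSet d A, ∃ k : ℤ, ⟪ξ, p⟫ = (k : ℝ)}

/-- The (complex-valued) indicator function of a set. -/
def indC {d : ℕ} (D : Set (E d)) : E d → ℂ := D.indicator 1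

/-- The covariogram `γ_D(x) = ∫ I_D(y) I_D(y - x) dy`. -/
def covariogram {d : ℕ} (D : Set (E d)) (x : E d) : ℝ :=
  ∫ y, (D.indicator (1 : E d → ℝ) y) * (D.indicator (1 : E d → ℝ) (y - x))

/-- The normalized (probability) surface measure on the unit sphere `S^{d-1}`. -/
def sphereProb (d : ℕ) : Measure (sphere (0 : E d) 1) :=
  ((volume : Measure (E d)).toSphere Set.univ)⁻¹ • (volume : Measure (E d)).toSphere

/-- Rotational quadratic average of the modulus of the Fourier transform of `I_D`:
`γ̄̂_D(ρ) = ∫_{S^{d-1}} |Î_D(ρ ξ)|² dσ(ξ)`. -/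
def avgFT {d : ℕ} (D : Set (E d)) (ρ : ℝ) : ℝ :=
  ∫ ξ : sphere (0 : E d) 1, ‖𝓕 (indC D) (ρ • (ξ : E d))‖ ^ 2 ∂(sphereProb d)

/-- The isotropic covariogram, via its (equivalent) definition as the spherical average
`γ̄_D(u) = ∫_{S^{d-1}} γ_D(u ξ) dσ(ξ)`. -/
def isoCov {d : ℕ} (D : Set (E d)) (u : ℝ) : ℝ :=
  ∫ ξ : sphere (0 : E d) 1, covariogram D (u • (ξ : E d)) ∂(sphereProb d)

/-- Bessel function of the first kind (power series definition, real order). -/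
def besselJ (ν : ℝ) (z : ℝ) : ℝ :=
  ∑' k : ℕ, (-1 : ℝ) ^ k * (z / 2) ^ (ν + 2 * k) / (Nat.factorial k * Real.Gamma (ν + k + 1))

/-- `κ_d`, the volume of the unit ball in `ℝ^d`. -/
def unitBallVol (d : ℕ) : ℝ := Real.pi ^ ((d : ℝ) / 2) / Real.Gamma ((d : ℝ) / 2 + 1)

/-- The image of a set `D` under the rotation given by a matrix `M`. -/
def rotSet {d : ℕ} (M : Matrix (Fin d) (Fin d) ℝ) (D : Set (E d)) : Set (E d) :=
  (fun y => toE (M.mulVec (EuclideanSpace.equiv (Fin d) ℝ y))) '' D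

/-- The special orthogonal group `SO(d)`, as a set of matrices. -/
def SOSet (d : ℕ) : Set (Matrix (Fin d) (Fin d) ℝ) :=
  {M | M ∈ Matrix.specialOrthogonalGroup (Fin d) ℝ}

/-- Borel measurable structure on the space of `d × d` real matrices. -/
instance matrixMeasurableSpace {d : ℕ} : MeasurableSpace (Matrix (Fin d) (Fin d) ℝ) :=
  borel _

instance matrixBorelSpace {d : ℕ} : BorelSpace (Matrix (Fin d) (Fin d) ℝ) := ⟨rfl⟩

/-!
The Fourier transform of the covariogram of `D` is the squared modulus of the Fourier transform of
the indicator of `D`. Testing this against a dilated Gaussian, using that the Fourier transform is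
self-adjoint, and passing to polar coordinates gives
`∫ r ^ (d - 1) * exp (-π (ε r) ^ 2) * avgFT D r = ∫ s ^ (d - 1) * exp (-π s ^ 2) * isoCov D (ε s)`.
Subtract the same identity with `2 * ε` in place of `ε` and divide by `ε`. The left side becomes an
average of `ρ ^ (d + 1) * avgFT D ρ` at scale `ρ ≈ 1 / ε` and the right side an average of the
difference quotient `(isoCov D h - isoCov D (2 * h)) / h` at scale `h ≈ ε`, so as `ε → 0` each side
tends to its limit times the mass of its kernel. Comparing the two determines the limit. The
difference of Gaussians replaces Fourier inversion, for which `avgFT D` would have to be integrable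
against `ρ ^ (d - 1)`.
-/

section DilatedAverages

theorem tendsto_setIntegral_comp_mul_mul {l : Filter ℝ} [l.IsCountablyGenerated] {f K : ℝ → ℝ}
    {c C : ℝ} (hl : ∀ s, 0 < s → Tendsto (fun t => t * s) l l) (hpos : ∀ᶠ t in l, 0 < t)
    (hf : Measurable f) (hbdd : ∀ x, 0 < x → |f x| ≤ C) (hK : IntegrableOn K (Ioi 0))
    (hlim : Tendsto f l (𝓝 c)) :
    Tendsto (fun t => ∫ s in Ioi 0, f (t * s) * K s) l (𝓝 (c * ∫ s in Ioi 0, K s)) := by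
  rw [← integral_const_mul]
  refine tendsto_integral_filter_of_dominated_convergence (fun s => C * ‖K s‖)
    (.of_forall fun t => ?_) ?_ (hK.norm.const_mul C) ?_
  · exact (hf.comp (measurable_const_mul t)).aestronglyMeasurable.mul hK.aestronglyMeasurable
  · filter_upwards [hpos] with t ht
    filter_upwards [ae_restrict_mem measurableSet_Ioi] with s hs
    rw [norm_mul]
    exact mul_le_mul_of_nonneg_right (hbdd _ (mul_pos ht hs)) (norm_nonneg _)
  · filter_upwards [ae_restrict_mem measurableSet_Ioi] with s hs
    exact (hlim.comp (hl s hs)).mul_const _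

theorem tendsto_mul_const_nhdsGT_zero {a : ℝ} (ha : 0 < a) :
    Tendsto (fun t => t * a) (𝓝[>] 0) (𝓝[>] 0) := by
  refine tendsto_nhdsWithin_iff.2 ⟨?_, ?_⟩
  · exact ((continuous_mul_const a).tendsto' 0 0 (zero_mul a)).mono_left nhdsWithin_le_nhds
  · filter_upwards [self_mem_nhdsWithin] with t ht using mul_pos ht ha

theorem exists_forall_abs_pow_mul_le_of_tendsto_atTop {f : ℝ → ℝ} {m : ℕ} {c M : ℝ}
    (hf : ∀ x, |f x| ≤ M) (hlim : Tendsto (fun x => x ^ m * f x) atTop (𝓝 c)) :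
    ∃ C, ∀ x, 0 < x → |x ^ m * f x| ≤ C := by
  obtain ⟨R, hR⟩ := eventually_atTop.1 (hlim.abs.eventually_le_const (lt_add_one |c|))
  refine ⟨max (|c| + 1) (R ^ m * M), fun x hx => ?_⟩
  rcases le_total R x with hRx | hxR
  · exact (hR x hRx).trans (le_max_left _ _)
  · rw [abs_mul, abs_of_pos (pow_pos hx m)]
    exact le_max_of_le_right (mul_le_mul (pow_le_pow_left₀ hx.le hxR m) (hf x) (abs_nonneg _)
      (pow_nonneg (hx.le.trans hxR) m))

theorem exists_forall_abs_div_le_of_tendsto_nhdsGT_zero {f : ℝ → ℝ} {c M : ℝ}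
    (hf : ∀ x, |f x| ≤ M) (hlim : Tendsto (fun x => f x / x) (𝓝[>] 0) (𝓝 c)) :
    ∃ C, ∀ x, 0 < x → |f x / x| ≤ C := by
  have hinv : Tendsto (fun x => x ^ 1 * f x⁻¹) atTop (𝓝 c) :=
    (hlim.comp tendsto_inv_atTop_nhdsGT_zero).congr fun x => by simp [div_eq_mul_inv, mul_comm]
  obtain ⟨C, hC⟩ := exists_forall_abs_pow_mul_le_of_tendsto_atTop (fun x => hf x⁻¹) hinv
  refine ⟨C, fun x hx => ?_⟩
  simpa [div_eq_mul_inv, mul_comm] using hC x⁻¹ (inv_pos.2 hx)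

theorem tendsto_sub_comp_two_mul_div_nhdsGT_zero {f : ℝ → ℝ} {f' : ℝ}
    (hf : Tendsto (fun h => (f h - f 0) / h) (𝓝[>] 0) (𝓝 f')) :
    Tendsto (fun h => (f h - f (2 * h)) / h) (𝓝[>] 0) (𝓝 (-f')) := by
  have h2 := (hf.comp (tendsto_mul_const_nhdsGT_zero two_pos)).const_mul 2
  refine ((hf.sub h2).congr fun h => ?_).trans_eq (by ring_nf)
  rcases eq_or_ne h 0 with rfl | hh
  · simp
  · simp only [Function.comp_apply, mul_comm h 2]
    field_simp
    ring

end DilatedAverages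

section GaussianIntegrals

theorem exp_neg_sub_exp_neg_le (x y : ℝ) : rexp (-x) - rexp (-y) ≤ (y - x) * rexp (-x) := by
  have hle : 1 - (y - x) ≤ rexp (-(y - x)) := Real.one_sub_le_exp_neg _
  have hmul : rexp (-x) * rexp (-(y - x)) = rexp (-y) := by rw [← Real.exp_add]; ring_nf
  nlinarith [Real.exp_pos (-x)]

theorem abs_exp_neg_sub_exp_neg_le (x y : ℝ) :
    |rexp (-x) - rexp (-y)| ≤ |y - x| * (rexp (-x) + rexp (-y)) := by
  have hbound (u v : ℝ) : rexp (-u) - rexp (-v) ≤ |v - u| * (rexp (-u) + rexp (-v)) :=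
    (exp_neg_sub_exp_neg_le u v).trans (mul_le_mul (le_abs_self _)
      (le_add_of_nonneg_right (Real.exp_nonneg _)) (Real.exp_nonneg _) (abs_nonneg _))
  refine abs_sub_le_iff.2 ⟨hbound x y, ?_⟩
  rw [abs_sub_comm, add_comm (rexp (-x))]
  exact hbound y x

theorem abs_exp_neg_mul_sq_sub_div_sq_le (a b s : ℝ) :
    |(rexp (-a * s ^ 2) - rexp (-b * s ^ 2)) / s ^ 2| ≤
      |b - a| * (rexp (-a * s ^ 2) + rexp (-b * s ^ 2)) := by
  have h := abs_exp_neg_sub_exp_neg_le (a * s ^ 2) (b * s ^ 2)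
  rw [← sub_mul, abs_mul, abs_of_nonneg (sq_nonneg s)] at h
  rw [abs_div, abs_of_nonneg (sq_nonneg s), neg_mul, neg_mul]
  exact div_le_of_le_mul₀ (sq_nonneg s) (by positivity) (h.trans_eq (by ring))

theorem integrableOn_exp_neg_mul_sq_sub_div_sq {a b : ℝ} (ha : 0 < a) (hb : 0 < b) :
    IntegrableOn (fun s => (rexp (-a * s ^ 2) - rexp (-b * s ^ 2)) / s ^ 2) (Ioi 0) := by
  have hbound := ((integrable_exp_neg_mul_sq ha).add (integrable_exp_neg_mul_sq hb)).const_mul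
    |b - a|
  exact hbound.integrableOn.mono' (Measurable.aestronglyMeasurable (by fun_prop))
    (.of_forall fun s => abs_exp_neg_mul_sq_sub_div_sq_le a b s)

theorem hasDerivAt_exp_neg_mul_sq (b s : ℝ) :
    HasDerivAt (fun s => rexp (-b * s ^ 2)) (-(2 * b * s) * rexp (-b * s ^ 2)) s := by
  convert ((hasDerivAt_pow 2 s).const_mul (-b)).exp using 1
  ring

theorem tendsto_exp_neg_mul_sq_sub_mul_neg_inv_nhdsGT_zero (a b : ℝ) :
    Tendsto (fun s => (rexp (-a * s ^ 2) - rexp (-b * s ^ 2)) * -s⁻¹) (𝓝[>] 0) (𝓝 0) := by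
  have h := ((hasDerivAt_exp_neg_mul_sq a 0).fun_sub
    (hasDerivAt_exp_neg_mul_sq b 0)).tendsto_slope.mono_left (nhdsGT_le_nhdsNE 0)
  simpa [slope_fun_def_field, div_eq_mul_inv] using h.neg

theorem tendsto_exp_neg_mul_sq_sub_mul_neg_inv_atTop {a b : ℝ} (ha : 0 ≤ a) (hb : 0 ≤ b) :
    Tendsto (fun s => (rexp (-a * s ^ 2) - rexp (-b * s ^ 2)) * -s⁻¹) atTop (𝓝 0) := by
  refine bdd_le_mul_tendsto_zero' 1 (.of_forall fun s => ?_) ?_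
  · have hle {c : ℝ} (hc : 0 ≤ c) : rexp (-c * s ^ 2) ≤ 1 :=
      Real.exp_le_one_iff.2 (by rw [neg_mul]; exact neg_nonpos.2 (by positivity))
    exact abs_sub_le_of_nonneg_of_le (Real.exp_nonneg _) (hle ha) (Real.exp_nonneg _) (hle hb)
  · simpa using (tendsto_inv_atTop_zero (𝕜 := ℝ)).neg

theorem integral_exp_neg_mul_sq_sub_div_sq {a b : ℝ} (ha : 0 < a) (hb : 0 < b) :
    ∫ s in Ioi 0, (rexp (-a * s ^ 2) - rexp (-b * s ^ 2)) / s ^ 2 = √(π * b) - √(π * a) := by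
  have hderiv_inv {s : ℝ} (hs : s ∈ Ioi 0) : HasDerivAt (fun s => -s⁻¹) (s ^ 2)⁻¹ s := by
    simpa using (hasDerivAt_inv (𝕜 := ℝ) (ne_of_gt hs)).fun_neg
  have hderiv_mul {s : ℝ} (hs : s ∈ Ioi 0) :
      2 * a * rexp (-a * s ^ 2) - 2 * b * rexp (-b * s ^ 2) =
        (-(2 * a * s) * rexp (-a * s ^ 2) - -(2 * b * s) * rexp (-b * s ^ 2)) * -s⁻¹ := by
    have : s ≠ 0 := ne_of_gt hs
    field_simp
    ring
  have hsqrt {c : ℝ} (hc : 0 < c) : c * √(π / c) = √(π * c) := by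
    rw [← Real.sqrt_sq hc.le, ← Real.sqrt_mul (sq_nonneg c), Real.sqrt_sq hc.le]
    congr 1
    field_simp
  have hga := ((integrable_exp_neg_mul_sq ha).const_mul (2 * a)).integrableOn (s := Ioi 0)
  have hgb := ((integrable_exp_neg_mul_sq hb).const_mul (2 * b)).integrableOn (s := Ioi 0)
  have hparts := integral_Ioi_mul_deriv_eq_deriv_mul
    (fun s _ => (hasDerivAt_exp_neg_mul_sq a s).fun_sub (hasDerivAt_exp_neg_mul_sq b s))
    (fun s => hderiv_inv) (integrableOn_exp_neg_mul_sq_sub_div_sq ha hb)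
    ((hga.sub hgb).congr_fun (fun s => hderiv_mul) measurableSet_Ioi)
    (tendsto_exp_neg_mul_sq_sub_mul_neg_inv_nhdsGT_zero a b)
    (tendsto_exp_neg_mul_sq_sub_mul_neg_inv_atTop ha.le hb.le)
  rw [← setIntegral_congr_fun measurableSet_Ioi fun s => hderiv_mul, integral_sub hga hgb,
    integral_const_mul, integral_const_mul, integral_gaussian_Ioi, integral_gaussian_Ioi] at hparts
  refine hparts.trans ?_
  rw [← hsqrt ha, ← hsqrt hb]
  ring

theorem integrableOn_pow_mul_exp_neg_mul_sq (n : ℕ) {b : ℝ} (hb : 0 < b) :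
    IntegrableOn (fun s : ℝ => s ^ n * rexp (-b * s ^ 2)) (Ioi 0) := by
  simpa using (integrable_rpow_mul_exp_neg_mul_sq hb (s := n)
    (neg_one_lt_zero.trans_le n.cast_nonneg)).integrableOn

theorem two_mul_pi_mul_unitBallVol_mul_integral_pow_succ_mul_exp (n : ℕ) :
    2 * π * unitBallVol n * ∫ s in Ioi (0 : ℝ), s ^ (n + 1) * rexp (-π * s ^ 2) = 1 := by
  have hint : ∫ s in Ioi (0 : ℝ), s ^ (n + 1) * rexp (-π * s ^ 2) =
      π ^ (-((n : ℝ) / 2 + 1)) * (1 / 2) * Real.Gamma ((n : ℝ) / 2 + 1) := by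
    have h := _root_.integral_rpow_mul_exp_neg_mul_rpow (p := 2) (q := (n + 1 : ℕ)) two_pos
      (neg_one_lt_zero.trans_le (Nat.cast_nonneg _)) pi_pos
    simp only [Real.rpow_natCast, Real.rpow_two] at h
    rw [h]
    push_cast
    ring_nf
  have hpow : π ^ ((n : ℝ) / 2) * π ^ (-((n : ℝ) / 2 + 1)) = π⁻¹ := by
    rw [← Real.rpow_add pi_pos, ← Real.rpow_neg_one]
    ring_nf
  have hΓ : Real.Gamma ((n : ℝ) / 2 + 1) ≠ 0 := (Real.Gamma_pos_of_pos (by positivity)).ne'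
  rw [hint, unitBallVol]
  calc _ = π * (π ^ ((n : ℝ) / 2) * π ^ (-((n : ℝ) / 2 + 1))) := by field_simp [hΓ]
    _ = 1 := by rw [hpow, mul_inv_cancel₀ pi_ne_zero]

end GaussianIntegrals

section GaussianPairing

theorem integrableOn_pow_mul_exp_neg_mul_sq_mul {f : ℝ → ℝ} {M b : ℝ} (n : ℕ) (hb : 0 < b)
    (hfm : Measurable f) (hf : ∀ s, |f s| ≤ M) :
    IntegrableOn (fun s => s ^ n * rexp (-b * s ^ 2) * f s) (Ioi 0) :=
  (integrableOn_pow_mul_exp_neg_mul_sq n hb).mul_bdd hfm.aestronglyMeasurable (.of_forall hf)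

theorem setIntegral_Ioi_zero_eq_mul_comp_mul_left (g : ℝ → ℝ) {b : ℝ} (hb : 0 < b) :
    ∫ x in Ioi 0, g x = b * ∫ x in Ioi 0, g (b * x) := by
  simpa using (integral_comp_mul_left_Ioi' g 0 hb).symm

variable {φ ψ : ℝ → ℝ} {M N : ℝ} {n : ℕ} (hφm : Measurable φ) (hψm : Measurable ψ)
  (hφ : ∀ h, |φ h| ≤ M) (hψ : ∀ ρ, |ψ ρ| ≤ N)
  (hpair : ∀ ε, 0 < ε → ∫ r in Ioi 0, r ^ n * rexp (-π * (ε * r) ^ 2) * ψ r =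
    ∫ s in Ioi 0, s ^ n * rexp (-π * s ^ 2) * φ (ε * s))

include hφm hψm hφ hψ hpair

theorem integral_sub_exp_mul_eq_integral_sub_mul_exp {ε : ℝ} (hε : 0 < ε) :
    ∫ r in Ioi 0, r ^ n * (rexp (-π * (ε * r) ^ 2) - rexp (-π * (2 * ε * r) ^ 2)) * ψ r =
      ∫ s in Ioi 0, (φ (ε * s) - φ (2 * ε * s)) * (s ^ n * rexp (-π * s ^ 2)) := by
  have hψint {δ : ℝ} (hδ : 0 < δ) :
      IntegrableOn (fun r => r ^ n * rexp (-π * (δ * r) ^ 2) * ψ r) (Ioi 0) := by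
    simpa only [mul_pow, neg_mul, mul_assoc] using integrableOn_pow_mul_exp_neg_mul_sq_mul n
      (mul_pos pi_pos (pow_pos hδ 2)) hψm hψ
  have hφint (δ : ℝ) :
      IntegrableOn (fun s => s ^ n * rexp (-π * s ^ 2) * φ (δ * s)) (Ioi 0) :=
    integrableOn_pow_mul_exp_neg_mul_sq_mul n pi_pos (hφm.comp (measurable_const_mul δ))
      fun s => hφ (δ * s)
  have h2ε : 0 < 2 * ε := mul_pos two_pos hε
  simp only [mul_sub, sub_mul, mul_comm _ (_ ^ n * rexp (-π * _ ^ 2))]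
  rw [integral_sub (hψint hε) (hψint h2ε), integral_sub (hφint ε) (hφint (2 * ε)), hpair ε hε,
    hpair (2 * ε) h2ε]

theorem integral_dilated_pow_mul_eq_integral_dilated_div {ε : ℝ} (hε : 0 < ε) :
    ∫ s in Ioi 0, (ε⁻¹ * s) ^ (n + 2) * ψ (ε⁻¹ * s) *
        ((rexp (-π * s ^ 2) - rexp (-(4 * π) * s ^ 2)) / s ^ 2) =
      ∫ s in Ioi 0, (φ (ε * s) - φ (2 * (ε * s))) / (ε * s) *
        (s ^ (n + 1) * rexp (-π * s ^ 2)) := by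
  rw [setIntegral_Ioi_zero_eq_mul_comp_mul_left _ hε]
  calc
    _ = ε⁻¹ * ∫ r in Ioi 0,
          r ^ n * (rexp (-π * (ε * r) ^ 2) - rexp (-π * (2 * ε * r) ^ 2)) * ψ r := by
      rw [← integral_const_mul, ← integral_const_mul]
      refine setIntegral_congr_fun measurableSet_Ioi fun r (hr : 0 < r) => ?_
      have hexp : -(4 * π) * (ε * r) ^ 2 = -π * (2 * ε * r) ^ 2 := by ring
      simp only [inv_mul_cancel_left₀ hε.ne', hexp]
      field_simp
      ring
    _ = ε⁻¹ * ∫ s in Ioi 0, (φ (ε * s) - φ (2 * ε * s)) * (s ^ n * rexp (-π * s ^ 2)) := by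
      rw [integral_sub_exp_mul_eq_integral_sub_mul_exp hφm hψm hφ hψ hpair hε]
    _ = _ := by
      rw [← integral_const_mul]
      refine setIntegral_congr_fun measurableSet_Ioi fun s (hs : 0 < s) => ?_
      simp only [mul_assoc 2 ε]
      field_simp
      ring

/-- Subtracting the pairings at the scales `ε` and `2 * ε` cancels the unknown value `φ 0`. -/
theorem mul_pi_eq_neg_mul_integral_of_gaussian_pairing {c φ' : ℝ}
    (hφ' : Tendsto (fun h => (φ h - φ 0) / h) (𝓝[>] 0) (𝓝 φ'))
    (hψlim : Tendsto (fun ρ => ρ ^ (n + 2) * ψ ρ) atTop (𝓝 c)) :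
    c * π = -φ' * ∫ s in Ioi 0, s ^ (n + 1) * rexp (-π * s ^ 2) := by
  have h4π : 0 < 4 * π := by positivity
  have hquot := tendsto_sub_comp_two_mul_div_nhdsGT_zero hφ'
  obtain ⟨A, hA⟩ := exists_forall_abs_pow_mul_le_of_tendsto_atTop hψ hψlim
  obtain ⟨B, hB⟩ := exists_forall_abs_div_le_of_tendsto_nhdsGT_zero (f := fun h => φ h - φ (2 * h))
    (fun h => (abs_sub _ _).trans (add_le_add (hφ h) (hφ (2 * h)))) hquot
  have hleft := (tendsto_setIntegral_comp_mul_mul (fun s hs => tendsto_id.atTop_mul_const hs)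
    (eventually_gt_atTop 0) (by fun_prop) hA (integrableOn_exp_neg_mul_sq_sub_div_sq pi_pos h4π)
    hψlim).comp tendsto_inv_nhdsGT_zero
  have hright := tendsto_setIntegral_comp_mul_mul (fun s => tendsto_mul_const_nhdsGT_zero)
    self_mem_nhdsWithin (by fun_prop) hB (integrableOn_pow_mul_exp_neg_mul_sq (n + 1) pi_pos) hquot
  have hkernel : ∫ s in Ioi 0, (rexp (-π * s ^ 2) - rexp (-(4 * π) * s ^ 2)) / s ^ 2 = π := by
    rw [integral_exp_neg_mul_sq_sub_div_sq pi_pos h4π, show π * (4 * π) = (2 * π) ^ 2 by ring,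
      ← sq, Real.sqrt_sq (by positivity), Real.sqrt_sq pi_pos.le]
    ring
  rw [hkernel] at hleft
  refine tendsto_nhds_unique hleft (hright.congr' ?_)
  filter_upwards [self_mem_nhdsWithin] with ε hε
  exact (integral_dilated_pow_mul_eq_integral_dilated_div hφm hψm hφ hψ hpair hε).symm

end GaussianPairing

section FourierGaussian

variable {V : Type*} [NormedAddCommGroup V] [InnerProductSpace ℝ V] [FiniteDimensional ℝ V]
  [MeasurableSpace V] [BorelSpace V]

theorem integrable_exp_neg_mul_sq_norm {b : ℝ} (hb : 0 < b) :
    Integrable fun v : V => rexp (-b * ‖v‖ ^ 2) := by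
  refine .of_integral_ne_zero ?_
  rw [GaussianFourier.integral_rexp_neg_mul_sq_norm hb]
  positivity

theorem fourier_exp_neg_pi_mul_sq_norm (w : V) :
    𝓕 (fun v : V => (rexp (-π * ‖v‖ ^ 2) : ℂ)) w = rexp (-π * ‖w‖ ^ 2) := by
  have hπ : (π : ℂ) ≠ 0 := ofReal_ne_zero.2 pi_ne_zero
  push_cast
  rw [fourier_gaussian_innerProductSpace (by simpa using pi_pos), div_self hπ, one_cpow, one_mul]
  congr 1
  field_simp

theorem fourier_comp_smul {F : Type*} [NormedAddCommGroup F] [NormedSpace ℂ F] (g : V → F) {a : ℝ}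
    (ha : a ≠ 0) (w : V) :
    𝓕 (fun x => g (a • x)) w = |(a ^ Module.finrank ℝ V)⁻¹| • 𝓕 g (a⁻¹ • w) := by
  rw [Real.fourier_eq, Real.fourier_eq, ← Measure.integral_comp_smul]
  simp only [real_inner_smul_left, real_inner_smul_right, inv_mul_cancel_left₀ ha]

theorem fourier_conj_comp_neg (f : V → ℂ) (ξ : V) :
    𝓕 (fun x => starRingEnd ℂ (f (-x))) ξ = starRingEnd ℂ (𝓕 f ξ) := by
  rw [Real.fourier_eq, Real.fourier_eq, ← integral_conj, ← integral_neg_eq_self]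
  simp [Circle.smul_def]

theorem integral_exp_neg_pi_mul_sq_norm_smul_mul_fourier {g : V → ℂ} (hg : Integrable g) {a : ℝ}
    (ha : a ≠ 0) :
    ∫ ξ, (rexp (-π * ‖a • ξ‖ ^ 2) : ℂ) * 𝓕 g ξ =
      ∫ x, (rexp (-π * ‖x‖ ^ 2) : ℂ) * g (a • x) := by
  have hself := VectorFourier.integral_fourierIntegral_smul_eq_flip (L := innerₗ V)
    Real.continuous_fourierChar continuous_inner (μ := volume) (ν := volume)
    (integrable_exp_neg_mul_sq_norm pi_pos).ofReal (hg.comp_smul ha)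
  rw [flip_innerₗ] at hself
  calc
    _ = |(a ^ Module.finrank ℝ V)⁻¹| •
          ∫ ξ, (rexp (-π * ‖ξ‖ ^ 2) : ℂ) * 𝓕 g (a⁻¹ • ξ) := by
      rw [← Measure.integral_comp_smul]
      simp only [inv_smul_smul₀ ha]
    _ = ∫ ξ, (rexp (-π * ‖ξ‖ ^ 2) : ℂ) * 𝓕 (fun x => g (a • x)) ξ := by
      simp only [fourier_comp_smul g ha, mul_smul_comm, integral_smul]
    _ = ∫ x, 𝓕 (fun v : V => (rexp (-π * ‖v‖ ^ 2) : ℂ)) x * g (a • x) := hself.symm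
    _ = _ := by simp only [fourier_exp_neg_pi_mul_sq_norm]

variable {f g : V → ℝ} (hf : Integrable f) (hfg : ∀ ξ, 𝓕 (fun x => (f x : ℂ)) ξ = g ξ)

include hf hfg

theorem continuous_of_fourier_eq_ofReal : Continuous g := by
  have hre : g = fun ξ => (𝓕 (fun x => (f x : ℂ)) ξ).re := funext fun ξ => by rw [hfg, ofReal_re]
  rw [hre]
  exact Complex.continuous_re.comp <| VectorFourier.fourierIntegral_continuous
    Real.continuous_fourierChar (L := innerₗ V) continuous_inner hf.ofReal

omit hf in
theorem abs_le_of_fourier_eq_ofReal (ξ : V) : |g ξ| ≤ ∫ x, |f x| := by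
  have h : ‖𝓕 (fun x => (f x : ℂ)) ξ‖ ≤ ∫ x, ‖(f x : ℂ)‖ :=
    VectorFourier.norm_fourierIntegral_le_integral_norm _ _ _ _ _
  simpa only [hfg, norm_real, Real.norm_eq_abs] using h

theorem integral_exp_neg_pi_mul_sq_norm_smul_mul_of_fourier_eq_ofReal {a : ℝ} (ha : a ≠ 0) :
    ∫ ξ, rexp (-π * ‖a • ξ‖ ^ 2) * g ξ = ∫ x, rexp (-π * ‖x‖ ^ 2) * f (a • x) := by
  have h := integral_exp_neg_pi_mul_sq_norm_smul_mul_fourier (g := fun x => (f x : ℂ)) hf.ofReal ha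
  simp only [hfg] at h
  exact_mod_cast h

end FourierGaussian

section PolarCoordinates

variable {V F : Type*} [NormedAddCommGroup V] [NormedSpace ℝ V] [NormedAddCommGroup F]
  [NormedSpace ℝ F]

theorem integral_volumeIoiPow (n : ℕ) (f : ℝ → F) :
    ∫ r : Ioi (0 : ℝ), f r ∂Measure.volumeIoiPow n = ∫ r in Ioi 0, r ^ n • f r := by
  simp only [Measure.volumeIoiPow, ENNReal.ofReal]
  rw [integral_withDensity_eq_integral_smul (measurable_subtype_coe.pow_const _).real_toNNReal,
    integral_subtype_comap measurableSet_Ioi fun r => Real.toNNReal (r ^ n) • f r]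
  refine setIntegral_congr_fun measurableSet_Ioi fun r hr => ?_
  simp only [NNReal.smul_def, Real.coe_toNNReal _ (pow_nonneg hr.out.le n)]

theorem snd_smul_fst_homeomorphUnitSphereProd (x : ({0}ᶜ : Set V)) :
    ((homeomorphUnitSphereProd V x).2 : ℝ) • ((homeomorphUnitSphereProd V x).1 : V) = x := by
  simp [smul_smul, norm_ne_zero_iff.2 x.2]

variable [FiniteDimensional ℝ V] [MeasurableSpace V] [BorelSpace V] [Nontrivial V]
  (μ : Measure V) [μ.IsAddHaarMeasure]

theorem integral_eq_integral_Ioi_pow_smul_integral_toSphere {f : V → F} (hf : Integrable f μ) :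
    ∫ x, f x ∂μ = ∫ r in Ioi (0 : ℝ), r ^ (Module.finrank ℝ V - 1) •
      ∫ ξ : sphere (0 : V) 1, f (r • (ξ : V)) ∂μ.toSphere := by
  have hmp := μ.measurePreserving_homeomorphUnitSphereProd
  have hemb := (homeomorphUnitSphereProd V).measurableEmbedding
  set G : sphere (0 : V) 1 × Ioi (0 : ℝ) → F := fun p => f ((p.2 : ℝ) • (p.1 : V))
  have hG : G ∘ homeomorphUnitSphereProd V = f ∘ Subtype.val :=
    funext fun x => congrArg f (snd_smul_fst_homeomorphUnitSphereProd x)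
  have hGint : Integrable G (μ.toSphere.prod (.volumeIoiPow (Module.finrank ℝ V - 1))) := by
    rw [← hmp.integrable_comp_emb hemb, hG,
      ← integrableOn_iff_comap_subtypeVal (measurableSet_singleton 0).compl]
    exact hf.integrableOn
  calc
    ∫ x, f x ∂μ = ∫ x : ({0}ᶜ : Set V), f x ∂μ.comap (↑) := by
      rw [integral_subtype_comap (measurableSet_singleton 0).compl f, restrict_compl_singleton]
    _ = ∫ p, G p ∂μ.toSphere.prod (.volumeIoiPow (Module.finrank ℝ V - 1)) := by
      rw [← hmp.integral_comp hemb]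
      exact integral_congr_ae (.of_forall fun x => (congrFun hG x).symm)
    _ = ∫ r, ∫ ξ, G (ξ, r) ∂μ.toSphere ∂.volumeIoiPow (Module.finrank ℝ V - 1) :=
      integral_prod_symm _ hGint
    _ = _ := integral_volumeIoiPow _ fun r => ∫ ξ : sphere (0 : V) 1, f (r • (ξ : V)) ∂μ.toSphere

end PolarCoordinates

section SphericalAverage

/-- The spherical mean of `f` at radius `r`. By definition `isoCov D` and `avgFT D` are the
spherical means of `covariogram D` and of `‖𝓕 (indC D) ξ‖ ^ 2`. -/
def sphereAvg {d : ℕ} (f : E d → ℝ) (r : ℝ) : ℝ :=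
  ∫ ξ : sphere (0 : E d) 1, f (r • (ξ : E d)) ∂sphereProb d

variable {d : ℕ} [NeZero d] {f : E d → ℝ}

theorem toSphere_univ_ne_zero : (volume : Measure (E d)).toSphere univ ≠ 0 :=
  Measure.measure_univ_ne_zero.2 (Measure.toSphere_ne_zero _)

theorem toSphere_real_univ_ne_zero : (volume : Measure (E d)).toSphere.real univ ≠ 0 :=
  ENNReal.toReal_ne_zero.2 ⟨toSphere_univ_ne_zero, measure_ne_top _ _⟩

instance isProbabilityMeasure_sphereProb : IsProbabilityMeasure (sphereProb d) :=
  ⟨ENNReal.inv_mul_cancel toSphere_univ_ne_zero (measure_ne_top _ _)⟩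

theorem measurable_sphereAvg (hf : Measurable f) : Measurable (sphereAvg f) := by
  have hcont : Continuous fun p : ℝ × sphere (0 : E d) 1 => p.1 • (p.2 : E d) := by fun_prop
  have hsm : StronglyMeasurable fun p : ℝ × sphere (0 : E d) 1 => f (p.1 • (p.2 : E d)) :=
    (hf.comp hcont.measurable).stronglyMeasurable
  exact hsm.integral_prod_right.measurable

theorem abs_sphereAvg_le {M : ℝ} (hf : ∀ x, |f x| ≤ M) (r : ℝ) : |sphereAvg f r| ≤ M := by
  simpa [sphereAvg] using norm_integral_le_of_norm_le_const (μ := sphereProb d)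
    (f := fun ξ : sphere (0 : E d) 1 => f (r • (ξ : E d))) (.of_forall fun ξ => hf (r • (ξ : E d)))

theorem integral_toSphere_eq_mul_sphereAvg (f : E d → ℝ) (r : ℝ) :
    ∫ ξ : sphere (0 : E d) 1, f (r • (ξ : E d)) ∂(volume : Measure (E d)).toSphere =
      (volume : Measure (E d)).toSphere.real univ * sphereAvg f r := by
  rw [sphereAvg, sphereProb, integral_smul_measure, ENNReal.toReal_inv, smul_eq_mul]
  exact (mul_inv_cancel_left₀ toSphere_real_univ_ne_zero _).symm

theorem integral_comp_norm_mul_eq_mul_integral_sphereAvg {w : ℝ → ℝ}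
    (h : Integrable fun x => w ‖x‖ * f x) :
    ∫ x, w ‖x‖ * f x = (volume : Measure (E d)).toSphere.real univ *
      ∫ r in Ioi 0, r ^ (d - 1) * w r * sphereAvg f r := by
  rw [integral_eq_integral_Ioi_pow_smul_integral_toSphere volume h, ← integral_const_mul]
  refine setIntegral_congr_fun measurableSet_Ioi fun r (hr : 0 < r) => ?_
  simp only [norm_smul, norm_eq_of_mem_sphere, Real.norm_of_nonneg hr.le, mul_one,
    finrank_euclideanSpace_fin, integral_const_mul, integral_toSphere_eq_mul_sphereAvg, smul_eq_mul]
  ring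

theorem integral_gaussian_mul_sphereAvg_of_fourier_eq_ofReal {f g : E d → ℝ} (hf : Integrable f)
    (hfg : ∀ ξ, 𝓕 (fun x => (f x : ℂ)) ξ = g ξ) {ε : ℝ} (hε : 0 < ε) :
    ∫ r in Ioi 0, r ^ (d - 1) * rexp (-π * (ε * r) ^ 2) * sphereAvg g r =
      ∫ s in Ioi 0, s ^ (d - 1) * rexp (-π * s ^ 2) * sphereAvg f (ε * s) := by
  have hleft : Integrable fun ξ => rexp (-π * (ε * ‖ξ‖) ^ 2) * g ξ := by
    have hgauss : Integrable fun ξ : E d => rexp (-π * (ε * ‖ξ‖) ^ 2) := by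
      simpa only [mul_pow, neg_mul, mul_assoc] using
        integrable_exp_neg_mul_sq_norm (mul_pos pi_pos (pow_pos hε 2))
    exact hgauss.mul_bdd (continuous_of_fourier_eq_ofReal hf hfg).aestronglyMeasurable
      (.of_forall (abs_le_of_fourier_eq_ofReal hfg))
  have hright : Integrable fun x => rexp (-π * ‖x‖ ^ 2) * f (ε • x) := by
    refine (hf.comp_smul hε.ne').bdd_mul (c := 1)
      (integrable_exp_neg_mul_sq_norm pi_pos).aestronglyMeasurable (.of_forall fun x => ?_)
    rw [Real.norm_of_nonneg (Real.exp_nonneg _), Real.exp_le_one_iff, neg_mul]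
    exact neg_nonpos.2 (by positivity)
  have hpair := integral_exp_neg_pi_mul_sq_norm_smul_mul_of_fourier_eq_ofReal hf hfg hε.ne'
  simp only [norm_smul_of_nonneg hε.le] at hpair
  rw [integral_comp_norm_mul_eq_mul_integral_sphereAvg (w := fun r => rexp (-π * (ε * r) ^ 2))
    hleft, integral_comp_norm_mul_eq_mul_integral_sphereAvg (w := fun r => rexp (-π * r ^ 2))
    hright] at hpair
  simpa only [sphereAvg, smul_smul] using
    mul_left_cancel₀ toSphere_real_univ_ne_zero hpair

end SphericalAverage

section Covariogram

variable {d : ℕ} {D : Set (E d)}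

theorem integrable_indC (hD : MeasurableSet D) (hDfin : volume D ≠ ∞) : Integrable (indC D) :=
  (integrable_indicator_iff hD).2 (integrableOn_const (hs := hDfin))

theorem conj_indC (x : E d) : starRingEnd ℂ (indC D x) = indC D x := by
  by_cases hx : x ∈ D <;> simp [indC, hx]

theorem ofReal_covariogram :
    (fun x => (covariogram D x : ℂ)) =
      convolution (indC D) (fun x => indC D (-x)) (ContinuousLinearMap.mul ℂ ℂ) volume := by
  funext x
  rw [covariogram, convolution_def, ← integral_complex_ofReal]
  refine integral_congr_ae (.of_forall fun y => ?_)
  by_cases hy : y ∈ D <;> by_cases hyx : y - x ∈ D <;> simp [indC, hy, hyx]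

theorem integrable_covariogram (hD : MeasurableSet D) (hDfin : volume D ≠ ∞) :
    Integrable (covariogram D) := by
  have hind := integrable_indC hD hDfin
  have hconv : Integrable fun x => (covariogram D x : ℂ) := by
    rw [ofReal_covariogram]
    exact hind.integrable_convolution _ hind.comp_neg
  exact hconv.re

theorem fourier_covariogram (hD : MeasurableSet D) (hDfin : volume D ≠ ∞) (ξ : E d) :
    𝓕 (fun x => (covariogram D x : ℂ)) ξ = (‖𝓕 (indC D) ξ‖ ^ 2 : ℝ) := by
  have hind := integrable_indC hD hDfin
  have hneg : 𝓕 (fun x => indC D (-x)) ξ = starRingEnd ℂ (𝓕 (indC D) ξ) := by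
    simpa only [conj_indC] using fourier_conj_comp_neg (indC D) ξ
  rw [ofReal_covariogram, Real.fourier_mul_convolution_eq hind hind.comp_neg, hneg,
    Complex.mul_conj, Complex.normSq_eq_norm_sq]

theorem measurable_covariogram (hD : MeasurableSet D) : Measurable (covariogram D) := by
  have hind : Measurable (D.indicator (1 : E d → ℝ)) := measurable_one.indicator hD
  have hsm : StronglyMeasurable fun p : E d × E d =>
      D.indicator (1 : E d → ℝ) p.2 * D.indicator (1 : E d → ℝ) (p.2 - p.1) :=
    ((hind.comp measurable_snd).mul
      (hind.comp (measurable_snd.sub measurable_fst))).stronglyMeasurable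
  exact hsm.integral_prod_right.measurable

theorem abs_covariogram_le (hD : MeasurableSet D) (hDfin : volume D ≠ ∞) (x : E d) :
    |covariogram D x| ≤ volume.real D := by
  have hind : Integrable (D.indicator (1 : E d → ℝ)) :=
    (integrable_indicator_iff hD).2 (integrableOn_const (hs := hDfin))
  rw [← Real.norm_eq_abs, covariogram, ← integral_indicator_one hD]
  refine norm_integral_le_of_norm_le hind (.of_forall fun y => ?_)
  simp only [indicator]
  split_ifs <;> simp

theorem measurable_isoCov [NeZero d] (hD : MeasurableSet D) : Measurable (isoCov D) :=
  measurable_sphereAvg (measurable_covariogram hD)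

theorem abs_isoCov_le [NeZero d] (hD : MeasurableSet D) (hDfin : volume D ≠ ∞) (u : ℝ) :
    |isoCov D u| ≤ volume.real D :=
  abs_sphereAvg_le (abs_covariogram_le hD hDfin) u

theorem measurable_avgFT [NeZero d] (hD : MeasurableSet D) (hDfin : volume D ≠ ∞) :
    Measurable (avgFT D) :=
  measurable_sphereAvg (continuous_of_fourier_eq_ofReal (integrable_covariogram hD hDfin)
    (fourier_covariogram hD hDfin)).measurable

theorem abs_avgFT_le [NeZero d] (hD : MeasurableSet D) (hDfin : volume D ≠ ∞) (ρ : ℝ) :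
    |avgFT D ρ| ≤ ∫ x, |covariogram D x| :=
  abs_sphereAvg_le (abs_le_of_fourier_eq_ofReal (fourier_covariogram hD hDfin)) ρ

theorem integral_gaussian_mul_avgFT [NeZero d] (hD : MeasurableSet D) (hDfin : volume D ≠ ∞)
    {ε : ℝ} (hε : 0 < ε) :
    ∫ r in Ioi 0, r ^ (d - 1) * rexp (-π * (ε * r) ^ 2) * avgFT D r =
      ∫ s in Ioi 0, s ^ (d - 1) * rexp (-π * s ^ 2) * isoCov D (ε * s) :=
  integral_gaussian_mul_sphereAvg_of_fourier_eq_ofReal (integrable_covariogram hD hDfin)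
    (fourier_covariogram hD hDfin) hε

end Covariogram

theorem limit_avgFT_tendsto_general (d : ℕ) (hd : 1 ≤ d) (D : Set (E d)) (hD : MeasurableSet D)
    (hDfin : volume D ≠ ∞) (γ' : ℝ)
    (hderiv : Tendsto (fun h : ℝ => (isoCov D h - isoCov D 0) / h) (𝓝[>] (0 : ℝ)) (𝓝 γ'))
    (hlim : ∃ c : ℝ, Tendsto (fun ρ : ℝ => ρ ^ (d + 1) * avgFT D ρ) atTop (𝓝 c)) :
    Tendsto (fun ρ : ℝ => 2 * π ^ 2 * unitBallVol (d - 1) * ρ ^ (d + 1) * avgFT D ρ)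
      atTop (𝓝 (-γ')) := by
  obtain ⟨n, rfl⟩ : ∃ n, d = n + 1 := Nat.exists_eq_add_of_le' hd
  obtain ⟨c, hc⟩ := hlim
  have hlimits : c * π = -γ' * ∫ s in Ioi 0, s ^ (n + 1) * rexp (-π * s ^ 2) :=
    mul_pi_eq_neg_mul_integral_of_gaussian_pairing (measurable_isoCov hD)
      (measurable_avgFT hD hDfin) (abs_isoCov_le hD hDfin) (abs_avgFT_le hD hDfin)
      (fun _ => integral_gaussian_mul_avgFT hD hDfin) hderiv hc
  have hmoment := two_mul_pi_mul_unitBallVol_mul_integral_pow_succ_mul_exp n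
  have hvalue : 2 * π ^ 2 * unitBallVol n * c = -γ' := by
    linear_combination 2 * π * unitBallVol n * hlimits - γ' * hmoment
  rw [← hvalue]
  exact (hc.const_mul _).congr fun ρ => (mul_assoc _ _ _).symm

/-- if moreover `lim_{ρ→∞} ρ^{d+1} γ̄̂_D(ρ)` exists, then
`lim_{ρ→∞} 2π² κ_{d−1} ρ^{d+1} γ̄̂_D(ρ) = −γ̄_D'⁺(0)`. -/
theorem limit_avgFT_tendsto (d : ℕ) (hd : 1 ≤ d) (D : Set (E d))
    (hDmeas : MeasurableSet D) (hDbdd : Bornology.IsBounded D) (γ' : ℝ)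
    (hderiv : Tendsto (fun h : ℝ => (isoCov D h - isoCov D 0) / h) (𝓝[>] (0 : ℝ)) (𝓝 γ'))
    (hbdd : ∃ C : ℝ, ∀ ρ : ℝ, 0 < ρ → |ρ ^ (d + 1) * avgFT D ρ| ≤ C)
    (hlim : ∃ c : ℝ, Tendsto (fun ρ : ℝ => ρ ^ (d + 1) * avgFT D ρ) atTop (𝓝 c)) :
    Tendsto (fun ρ : ℝ => 2 * Real.pi ^ 2 * unitBallVol (d - 1) * ρ ^ (d + 1) * avgFT D ρ)
      atTop (𝓝 (-γ')) :=
  limit_avgFT_tendsto_general d hd D hDmeas hDbdd.measure_lt_top.ne γ' hderiv hlim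

end
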